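/- arXiv:2112.06781 — 2 statements merged into one kernel-verified Lean document; each statement's English description precedes it below -/
import Mathlib

section
/- Let (V,d) be a finite tree metric space and let Δ be a maximal simplex of diameter r_m in VR_{r_m}(V) that is a coface of a non-tree edge of length r_m. For any two non-tree edges f = {v,w} and e = {x,y} of length r_m contained in Δ and any vertex v ∈ f, at least one of {v,x}, {v,y} is a non-tree edge of length r_m contained in Δ. -/
def VRComplex (X : Type*) [MetricSpace X] (t : ℝ) : Set (Finset X) :=
  {σ | σ.Nonempty ∧ ∀ x ∈ σ, ∀ y ∈ σ, dist x y ≤ t}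

theorem tm_between {V : Type*} [MetricSpace V] (G : SimpleGraph V) (l : Sym2 V → ℝ)
    (hd : ∀ (x y : V) (p : G.Walk x y), p.IsPath → dist x y = (p.edges.map l).sum)
    {a b z : V} (p : G.Walk a b) (hp : p.IsPath) (hz : z ∈ p.support) :
    dist a b = dist a z + dist z b := by
  classical
  rw [hd a b p hp, hd a z _ (hp.takeUntil hz), hd z b _ (hp.dropUntil hz)]
  conv_lhs => rw [← p.take_spec hz]
  rw [SimpleGraph.Walk.edges_append, List.map_append, List.sum_append]

theorem tm_append {V : Type*} [MetricSpace V] (G : SimpleGraph V) (l : Sym2 V → ℝ)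
    (hd : ∀ (x y : V) (p : G.Walk x y), p.IsPath → dist x y = (p.edges.map l).sum)
    {a b c : V} (p : G.Walk a b) (hp : p.IsPath) (q : G.Walk b c) (hq : q.IsPath)
    (h : ∀ z ∈ p.support, z ∈ q.support → z = b) :
    dist a c = dist a b + dist b c := by
  have hpq : (p.append q).IsPath := by
    rw [SimpleGraph.Walk.isPath_def, SimpleGraph.Walk.support_append]
    have hq' := hq.support_nodup
    rw [SimpleGraph.Walk.support_eq_cons, List.nodup_cons] at hq'
    refine List.Nodup.append hp.support_nodup hq'.2 ?_
    intro z hz hz'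
    have := h z hz (List.mem_of_mem_tail hz')
    subst this
    exact hq'.1 hz'
  rw [hd a c _ hpq, hd a b p hp, hd b c q hq, SimpleGraph.Walk.edges_append,
    List.map_append, List.sum_append]

theorem tm_ord {V : Type*} [MetricSpace V] (G : SimpleGraph V) (l : Sym2 V → ℝ)
    (hd : ∀ (x y : V) (p : G.Walk x y), p.IsPath → dist x y = (p.edges.map l).sum)
    {v w m u : V} (p : G.Walk v w) (hp : p.IsPath) (hm : m ∈ p.support) (hu : u ∈ p.support) :
    (∃ s : G.Walk m u, s.IsPath ∧ s.support ⊆ p.support) ∧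
      (dist v u = dist v m + dist m u ∨ dist u w = dist u m + dist m w) := by
  classical
  have hm' := hm
  rw [← p.take_spec hu, SimpleGraph.Walk.mem_support_append_iff] at hm'
  rcases hm' with h | h
  · refine ⟨⟨(p.takeUntil u hu).dropUntil m h, (hp.takeUntil hu).dropUntil h, ?_⟩, Or.inl ?_⟩
    · exact fun z hz => p.support_takeUntil_subset_support hu
        ((p.takeUntil u hu).support_dropUntil_subset_support h hz)
    · exact tm_between G l hd _ (hp.takeUntil hu) h
  · refine ⟨⟨((p.dropUntil u hu).takeUntil m h).reverse,
      ((hp.dropUntil hu).takeUntil h).reverse, ?_⟩, Or.inr ?_⟩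
    · intro z hz
      rw [SimpleGraph.Walk.support_reverse, List.mem_reverse] at hz
      exact p.support_dropUntil_subset_support hu
        ((p.dropUntil u hu).support_takeUntil_subset_support h hz)
    · exact tm_between G l hd _ (hp.dropUntil hu) h

theorem tm_proj {V : Type*} [MetricSpace V] (G : SimpleGraph V) (l : Sym2 V → ℝ) (hT : G.IsTree)
    (hd : ∀ (x y : V) (p : G.Walk x y), p.IsPath → dist x y = (p.edges.map l).sum)
    {v w : V} (p : G.Walk v w) (hp : p.IsPath) (x : V) :
    ∃ m ∈ p.support, ∀ u ∈ p.support, dist x u = dist x m + dist m u := by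
  classical
  obtain ⟨m, hm, hmin⟩ := Finset.exists_min_image p.support.toFinset (fun z => dist x z)
    ⟨v, by simp⟩
  rw [List.mem_toFinset] at hm
  refine ⟨m, hm, fun u hu => ?_⟩
  obtain ⟨q, hq, -⟩ := hT.existsUnique_path x m
  obtain ⟨⟨s, hs, hsub⟩, -⟩ := tm_ord G l hd p hp hm hu
  refine tm_append G l hd q hq s hs fun z hz hz' => ?_
  have h1 := hmin z (List.mem_toFinset.2 (hsub hz'))
  have h2 := tm_between G l hd q hq hz
  exact dist_le_zero.1 (by linarith)

theorem tm_four {V : Type*} [MetricSpace V] (G : SimpleGraph V) (l : Sym2 V → ℝ) (hT : G.IsTree)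
    (hd : ∀ (x y : V) (p : G.Walk x y), p.IsPath → dist x y = (p.edges.map l).sum)
    (v w x y : V) :
    dist v w + dist x y ≤ dist v x + dist w y ∨ dist v w + dist x y ≤ dist v y + dist w x := by
  obtain ⟨p, hp, -⟩ := hT.existsUnique_path v w
  obtain ⟨m, hm, hM⟩ := tm_proj G l hT hd p hp x
  obtain ⟨n, hn, hN⟩ := tm_proj G l hT hd p hp y
  have a1 := hM v (by simp)
  have a2 := hM w (by simp)
  have b1 := hN v (by simp)
  have b2 := hN w (by simp)
  have c1 := tm_between G l hd p hp hm
  have c2 := tm_between G l hd p hp hn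
  have t := dist_triangle4 x m n y
  rw [dist_comm v x, dist_comm w y, dist_comm v y, dist_comm w x]
  rw [dist_comm v m] at c1
  rw [dist_comm v n] at c2
  rw [dist_comm n y] at t
  rcases (tm_ord G l hd p hp hm hn).2 with h | h
  · rw [dist_comm v n, dist_comm v m] at h
    right; linarith
  · rw [dist_comm n m] at h
    left; linarith

theorem tm_edge {V : Type*} [MetricSpace V] (G : SimpleGraph V) (l : Sym2 V → ℝ) (hT : G.IsTree)
    (hd : ∀ (x y : V) (p : G.Walk x y), p.IsPath → dist x y = (p.edges.map l).sum)
    {a b : V} (h : G.Adj a b) (y : V) :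
    dist y b = dist y a + dist a b ∨ dist y a = dist y b + dist a b := by
  obtain ⟨m, hm, hM⟩ := tm_proj G l hT hd h.toWalk (SimpleGraph.Walk.IsPath.of_adj h) y
  have h1 := hM a (by simp)
  have h2 := hM b (by simp)
  have hm' : m = a ∨ m = b := by simpa using hm
  rcases hm' with rfl | rfl
  · exact Or.inl h2
  · right; rw [h1, dist_comm m a]

theorem stmt13 (V : Type*) [MetricSpace V] [Fintype V]
    (G : SimpleGraph V) (l : Sym2 V → ℝ) (hT : G.IsTree)
    (hl : ∀ e ∈ G.edgeSet, 0 < l e)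
    (hd : ∀ (x y : V) (p : G.Walk x y), p.IsPath → dist x y = (p.edges.map l).sum)
    (r : ℝ) (Δ : Finset V) (hΔ : Δ ∈ VRComplex V r)
    (hmax : ∀ σ ∈ VRComplex V r, Δ ⊆ σ → σ = Δ)
    (v w x y : V) (hvw : v ≠ w) (hvΔ : v ∈ Δ) (hwΔ : w ∈ Δ)
    (hdvw : dist v w = r) (hf : ¬G.Adj v w)
    (hxy : x ≠ y) (hxΔ : x ∈ Δ) (hyΔ : y ∈ Δ)
    (hdxy : dist x y = r) (he : ¬G.Adj x y) :
    (v ≠ x ∧ dist v x = r ∧ ¬G.Adj v x) ∨ (v ≠ y ∧ dist v y = r ∧ ¬G.Adj v y) := by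
  have hr : 0 < r := hdvw ▸ dist_pos.2 hvw
  have key : ∀ x y : V, y ∈ Δ → dist x y = r → ¬G.Adj x y → dist v x = r →
      v ≠ x ∧ dist v x = r ∧ ¬G.Adj v x := by
    intro x y hy hdxy he h
    refine ⟨dist_pos.1 (h ▸ hr), h, fun hadj => ?_⟩
    have hvy := hΔ.2 v hvΔ y hy
    rw [dist_comm] at hdxy hvy
    rcases tm_edge G l hT hd hadj y with h1 | h1
    · have : y = v := dist_le_zero.1 (by linarith)
      subst this
      exact he hadj.symm
    · linarith
  have e1 := hΔ.2 v hvΔ x hxΔ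
  have e2 := hΔ.2 v hvΔ y hyΔ
  have e3 := hΔ.2 w hwΔ x hxΔ
  have e4 := hΔ.2 w hwΔ y hyΔ
  rcases tm_four G l hT hd v w x y with h | h
  · exact Or.inl (key x y hyΔ hdxy he (by linarith))
  · exact Or.inr (key y x hxΔ (by rw [dist_comm, hdxy]) (fun h => he h.symm) (by linarith))
end

section
/- Let (V,d) be a finite tree metric space with distance values 0 = r₀ < r₁ < ⋯ < r_l. If Δ and Δ' are two distinct maximal simplices of VR_{r_m}(V) each containing a non-tree edge of length r_m, and Δ ∩ Δ' is nonempty, then Δ ∩ Δ' is a simplex of VR_{r_{m−1}}(V) ∪ T_{r_m}, i.e., either diam(Δ∩Δ') ≤ r_{m−1} or Δ∩Δ' is a tree edge of length r_m. -/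
theorem aux_first {V : Type*} (G : SimpleGraph V) (S : Set V) {x a : V} (Q : G.Walk x a)
    (ha : a ∈ S) : ∃ p ∈ S, ∃ R : G.Walk x p, ∀ z ∈ R.support, z ∈ S → z = p := by
  induction Q with
  | nil => exact ⟨_, ha, SimpleGraph.Walk.nil, by simp⟩
  | @cons u v w h Q ih =>
    by_cases hu : u ∈ S
    · exact ⟨u, hu, SimpleGraph.Walk.nil, by simp⟩
    · obtain ⟨p, hp, R, hR⟩ := ih ha
      refine ⟨p, hp, SimpleGraph.Walk.cons h R, ?_⟩
      intro z hz hzS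
      rw [SimpleGraph.Walk.support_cons, List.mem_cons] at hz
      rcases hz with rfl | hz
      · exact absurd hzS hu
      · exact hR z hz hzS

theorem aux_append {V : Type*} (G : SimpleGraph V) {x p b : V} (R : G.Walk x p) (P : G.Walk p b)
    (hR : R.IsPath) (hP : P.IsPath) (h : ∀ z ∈ R.support, z ∈ P.support → z = p) :
    (R.append P).IsPath := by
  rw [SimpleGraph.Walk.isPath_def, SimpleGraph.Walk.support_append]
  have hP' := hP.support_nodup
  rw [← SimpleGraph.Walk.cons_tail_support, List.nodup_cons] at hP'
  refine List.Nodup.append hR.support_nodup hP'.2 ?_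
  intro z hz hz'
  have := h z hz (List.mem_of_mem_tail hz')
  subst this
  exact hP'.1 hz'

theorem aux_four {V : Type*} [MetricSpace V] [DecidableEq V]
    (G : SimpleGraph V) (l : Sym2 V → ℝ) (hT : G.IsTree)
    (hd : ∀ (x y : V) (p : G.Walk x y), p.IsPath → dist x y = (p.edges.map l).sum)
    (x y a b : V) :
    dist x y + dist a b ≤ max (dist x a + dist y b) (dist x b + dist y a) := by
  have split : ∀ {u p v : V} (A : G.Walk u p) (B : G.Walk p v), (A.append B).IsPath →
      dist u v = dist u p + dist p v := by
    intro u p v A B h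
    rw [hd _ _ _ h, hd _ _ A h.of_append_left, hd _ _ B h.of_append_right,
      SimpleGraph.Walk.edges_append, List.map_append, List.sum_append]
  obtain ⟨W⟩ := hT.connected.preconnected a b
  obtain ⟨P, hP⟩ : ∃ P : G.Walk a b, P.IsPath := ⟨W.bypass, W.bypass_isPath⟩
  have splitP : ∀ {u v : V} (A : G.Walk u v), A.IsPath → ∀ p ∈ A.support,
      dist u v = dist u p + dist p v := by
    intro u v A hA p hp
    apply split (A.takeUntil p hp) (A.dropUntil p hp)
    rwa [SimpleGraph.Walk.take_spec]
  have med : ∀ x, ∃ p ∈ P.support, dist x a = dist x p + dist p a ∧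
      dist x b = dist x p + dist p b := by
    intro x
    obtain ⟨Q⟩ := hT.connected.preconnected x a
    obtain ⟨p, hp, R, hR⟩ := aux_first G {z | z ∈ P.support} Q P.start_mem_support
    have hR' : ∀ z ∈ R.bypass.support, z ∈ P.support → z = p :=
      fun z hz => hR z (R.support_bypass_subset_support hz)
    refine ⟨p, hp, ?_, ?_⟩
    · apply split R.bypass (P.takeUntil p hp).reverse
      apply aux_append _ _ _ R.bypass_isPath (hP.takeUntil hp).reverse
      intro z hz hz'
      rw [SimpleGraph.Walk.support_reverse, List.mem_reverse] at hz'
      exact hR' z hz (P.support_takeUntil_subset_support hp hz')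
    · apply split R.bypass (P.dropUntil p hp)
      apply aux_append _ _ _ R.bypass_isPath (hP.dropUntil hp)
      intro z hz hz'
      exact hR' z hz (P.support_dropUntil_subset_support hp hz')
  obtain ⟨p, hp, h1, h2⟩ := med x
  obtain ⟨q, hq, h3, h4⟩ := med y
  have h5 := splitP P hP p hp
  have h6 := splitP P hP q hq
  have t1 := dist_triangle4 x p q y
  have e1 := dist_comm q y
  have e2 := dist_comm p a
  have e3 := dist_comm q a
  have e4 := dist_comm p q
  have hq' := hq
  rw [← P.take_spec hp, SimpleGraph.Walk.mem_support_append_iff] at hq'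
  rcases hq' with h | h
  · have := splitP _ (hP.takeUntil hp) q h
    apply le_max_of_le_left
    linarith
  · have := splitP _ (hP.dropUntil hp) q h
    apply le_max_of_le_right
    linarith

/-- In a finite tree metric space, if `Δ` and `Δ'` are distinct maximal simplices of
`VR_r(V)` (for a distance value `r = r_m`), each containing a non-tree edge of
length `r`, and `Δ ∩ Δ'` is nonempty, then `Δ ∩ Δ'` lies in
`VR_{r_{m-1}}(V) ∪ T_{r_m}`: either all pairwise distances in `Δ ∩ Δ'` are `< r`
(i.e. `diam(Δ ∩ Δ') ≤ r_{m−1}`), or `Δ ∩ Δ'` is a tree edge of length `r`. -/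
theorem stmt15 (V : Type*) [MetricSpace V] [Fintype V] [DecidableEq V]
    (G : SimpleGraph V) (l : Sym2 V → ℝ) (hT : G.IsTree)
    (hl : ∀ e ∈ G.edgeSet, 0 < l e)
    (hd : ∀ (x y : V) (p : G.Walk x y), p.IsPath → dist x y = (p.edges.map l).sum)
    (r : ℝ) (Δ Δ' : Finset V)
    (hΔ : Δ ∈ VRComplex V r) (hΔ' : Δ' ∈ VRComplex V r)
    (hmax : ∀ σ ∈ VRComplex V r, Δ ⊆ σ → σ = Δ)
    (hmax' : ∀ σ ∈ VRComplex V r, Δ' ⊆ σ → σ = Δ')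
    (hne : Δ ≠ Δ')
    (hedge : ∃ a ∈ Δ, ∃ b ∈ Δ, a ≠ b ∧ dist a b = r ∧ ¬G.Adj a b)
    (hedge' : ∃ a ∈ Δ', ∃ b ∈ Δ', a ≠ b ∧ dist a b = r ∧ ¬G.Adj a b)
    (hint : (Δ ∩ Δ').Nonempty) :
    (∀ a ∈ Δ ∩ Δ', ∀ b ∈ Δ ∩ Δ', dist a b < r) ∨
      (∃ a b : V, G.Adj a b ∧ dist a b = r ∧ Δ ∩ Δ' = {a, b}) := by 
  left
  intro a ha b hb
  rw [Finset.mem_inter] at ha hb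
  have hle := hΔ.2 a ha.1 b hb.1
  refine lt_of_le_of_ne hle fun hab => hne ?_
  have key : ∀ x ∈ Δ, ∀ y ∈ Δ', dist x y ≤ r := by
    intro x hx y hy
    have h := aux_four G l hT hd x y a b
    have h1 := hΔ.2 x hx a ha.1
    have h2 := hΔ.2 x hx b hb.1
    have h3 := hΔ'.2 y hy a ha.2
    have h4 := hΔ'.2 y hy b hb.2
    rcases le_max_iff.1 h with h | h <;> linarith
  have hU : Δ ∪ Δ' ∈ VRComplex V r := by
    refine ⟨⟨a, Finset.mem_union_left _ ha.1⟩, ?_⟩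
    intro x hx y hy
    rcases Finset.mem_union.1 hx with hx | hx <;> rcases Finset.mem_union.1 hy with hy | hy
    · exact hΔ.2 x hx y hy
    · exact key x hx y hy
    · rw [dist_comm]; exact key y hy x hx
    · exact hΔ'.2 x hx y hy
  exact (hmax _ hU Finset.subset_union_left).symm.trans (hmax' _ hU Finset.subset_union_right)
end
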